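/- Let H be a frustration-free Hamiltonian on a chain of n qudits as in the setup, with spectral gap γ, noncommutation degree g, L layers, and coarse-grained Hamiltonian H̄(t) with spectral gap γ(H̄(t)), for a coarse-graining parameter t with 8L² < t < n/5. If γ ≤ g²/4, then γ(H̄(t)) ≥ t²γ / (400·L²·g² + 3·t²·γ). -/

import Mathlib

open scoped ComplexOrder
open scoped Fin.NatCast

variable {E : Type*} [NormedAddCommGroup E] [InnerProductSpace ℂ E] [FiniteDimensional ℂ E]

/-- An orthogonal projector: a self-adjoint idempotent operator. -/
def IsProjector (P : E →L[ℂ] E) : Prop := IsSelfAdjoint P ∧ P * P = P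

/-- The smallest nonzero (for a positive semidefinite operator, smallest positive)
eigenvalue of an operator. -/
noncomputable def minNonzeroEig (A : E →L[ℂ] E) : ℝ :=
  sInf {c : ℝ | 0 < c ∧ ∃ v : E, v ≠ 0 ∧ A v = (c : ℂ) • v}

/-- The Loewner order: `A ⪯ B` iff `B − A` is positive semidefinite. -/
def Loewner (A B : E →L[ℂ] E) : Prop := (B - A).IsPositive

/-- The contiguous (cyclic) segment of `t` qudits starting at qudit `a` of the chain. -/
def seg {n : ℕ} [NeZero n] (a : Fin n) (t : ℕ) : Finset (Fin n) :=
  (Finset.range t).image (fun k : ℕ => a + (k : Fin n))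

/-- The bond `(i, i+1)` lies inside the region `F`. -/
def bondIn {n : ℕ} [NeZero n] (i : Fin n) (F : Finset (Fin n)) : Prop := i ∈ F ∧ i + 1 ∈ F

instance {n : ℕ} [NeZero n] (F : Finset (Fin n)) : DecidablePred (fun i => bondIn i F) :=
  fun i => inferInstanceAs (Decidable (i ∈ F ∧ i + 1 ∈ F))

/-- A frustration-free nearest-neighbour Hamiltonian `H = Σ_{i=1}^n H_i`,
`H_i = Σ_j P_{ij}`, on a (cyclic) chain of `n` qudits whose joint Hilbert space is `E`:
the `P_{ij}` are orthogonal projectors supported on the qudits `i, i+1`, each failing to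
commute with at most `g` other members of the family, and the family is partitioned into
`L` layers of pairwise commuting projectors. -/
structure ChainSetup (n : ℕ) [NeZero n] (E : Type*) [NormedAddCommGroup E]
    [InnerProductSpace ℂ E] [FiniteDimensional ℂ E] where
  /-- the number of projectors making up the interaction `H_i` on the bond `(i, i+1)` -/
  m : Fin n → ℕ
  /-- the projectors `P_{ij}`, supported on the qudits `i, i+1` -/
  P : (i : Fin n) → Fin (m i) → (E →L[ℂ] E)
  /-- the noncommutation degree -/
  g : ℕ
  /-- the number of layers -/
  L : ℕ
  /-- the assignment of each projector to a layer -/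
  layer : ((i : Fin n) × Fin (m i)) → Fin L
  proj : ∀ i j, IsProjector (P i j)
  /-- operational form of two-body locality: interactions on disjoint bonds commute -/
  locality : ∀ (i i' : Fin n) (j : Fin (m i)) (j' : Fin (m i')),
    Disjoint ({i, i + 1} : Finset (Fin n)) ({i', i' + 1} : Finset (Fin n)) →
    Commute (P i j) (P i' j')
  /-- each projector fails to commute with at most `g` other members of the family -/
  gbound : ∀ p : (i : Fin n) × Fin (m i),
    Nat.card {q : (i : Fin n) × Fin (m i) // q ≠ p ∧ ¬ Commute (P p.1 p.2) (P q.1 q.2)} ≤ g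
  /-- projectors within each layer pairwise commute -/
  layers : ∀ p q : (i : Fin n) × Fin (m i), layer p = layer q →
    Commute (P p.1 p.2) (P q.1 q.2)
  /-- frustration-freeness: there is a nonzero state annihilated by every `P_{ij}` -/
  frustFree : ∃ v : E, v ≠ 0 ∧ ∀ i j, P i j v = 0

namespace ChainSetup

variable {n : ℕ} [NeZero n]

/-- the bond interaction `H_i = Σ_j P_{ij}` -/
noncomputable def Hbond (C : ChainSetup n E) (i : Fin n) : E →L[ℂ] E := ∑ j, C.P i j

/-- the full Hamiltonian `H = Σ_i H_i` -/
noncomputable def Hfull (C : ChainSetup n E) : E →L[ℂ] E := ∑ i, C.Hbond i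

/-- `h_F = Σ_{i : i,i+1 ∈ F} H_i`, the Hamiltonian restricted to the region `F` -/
noncomputable def hamOn (C : ChainSetup n E) (F : Finset (Fin n)) : E →L[ℂ] E :=
  ∑ i ∈ Finset.univ.filter (fun i => bondIn i F), C.Hbond i

/-- the spectral gap `γ` of `H` -/
noncomputable def gap (C : ChainSetup n E) : ℝ := minNonzeroEig C.Hfull

/-- The local gap `γ(t)`: the minimum of the spectral gaps of `h_S` over contiguous
segments `S` of length `t`.  For the open chain (`openBC = true`) only segments that do
not wrap around the end of the chain are allowed. -/
noncomputable def localGap (C : ChainSetup n E) (openBC : Bool) (t : ℕ) : ℝ :=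
  sInf {x : ℝ | ∃ a : Fin n, (openBC = true → (a : ℕ) + t ≤ n) ∧
    x = minNonzeroEig (C.hamOn (seg a t))}

/-- `Q_F`: the orthogonal projector onto the orthogonal complement of the ground space of
`h_F` (for `F = ∅` this is `0`). -/
noncomputable def Qproj (C : ChainSetup n E) (F : Finset (Fin n)) : E →L[ℂ] E :=
  (LinearMap.ker (C.hamOn F : E →ₗ[ℂ] E))ᗮ.subtypeL ∘L
    Submodule.orthogonalProjection (LinearMap.ker (C.hamOn F : E →ₗ[ℂ] E))ᗮ

end ChainSetup

/-- the cyclic successor on `Fin M` -/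
def cyc {M : ℕ} (k : Fin M) : Fin M := ⟨((k : ℕ) + 1) % M, Nat.mod_lt _ k.pos⟩

/-- A coarse-graining configuration with parameter `t` on a chain of `n` qudits:
`⌊n/t⌋` pairwise disjoint contiguous segments `S_k = seg (s k) t` of length `t` in cyclic
order, with `r_k ≤ t/4` qudits between consecutive segments, and pairwise disjoint
contiguous segments `T_k` of length `t` placed between consecutive `S`-segments, each
overlapping `S_k` and `S_{k+1}` in at least `⌊t/4⌋` qudits.  For the open chain, exactly the
last `T`-segment is empty, `S_1` starts at the first qudit and `S_{⌊n/t⌋}` ends at the last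
qudit. -/
structure CoarseGraining (n : ℕ) [NeZero n] (t : ℕ) where
  /-- the number of `S`-segments, `⌊n/t⌋` -/
  M : ℕ
  hM : M = n / t
  hMpos : 0 < M
  /-- the starting points of the `S`-segments -/
  s : Fin M → Fin n
  /-- the numbers `r_k` of qudits sandwiched between consecutive `S`-segments -/
  r : Fin M → ℕ
  hr : ∀ k, 4 * r k ≤ t
  /-- the `S`-segments appear in cyclic order, `S_{k+1}` starting `t + r_k` after `S_k` -/
  hs : ∀ k : Fin M, s (cyc k) = s k + ((t + r k : ℕ) : Fin n)
  hSdisj : ∀ k l : Fin M, k ≠ l → Disjoint (seg (s k) t) (seg (s l) t)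
  /-- the `T`-segments -/
  T : Fin M → Finset (Fin n)
  hT : ∀ k, (∃ a : Fin n, T k = seg a t) ∨ T k = ∅
  hTdisj : ∀ k l : Fin M, k ≠ l → Disjoint (T k) (T l)
  hoverlap₁ : ∀ k, T k ≠ ∅ → t / 4 ≤ ((seg (s k) t) ∩ T k).card
  hoverlap₂ : ∀ k, T k ≠ ∅ → t / 4 ≤ ((seg (s (cyc k)) t) ∩ T k).card
  /-- only the last `T`-segment may be empty (the open-chain case), and in that case
  `S_1` starts at the first qudit and `S_M` ends at the last qudit -/
  hTempty : ∀ k, T k = ∅ → (k : ℕ) = M - 1 ∧ (s ⟨0, hMpos⟩ : ℕ) = 0 ∧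
    (s ⟨M - 1, Nat.sub_lt hMpos one_pos⟩ : ℕ) + t = n

namespace ChainSetup

variable {n : ℕ} [NeZero n]

/-- the coarse-grained Hamiltonian `H̄(t) = Σ_k (Q_{S_k} + Q_{T_k})` -/
noncomputable def coarseHam (C : ChainSetup n E) (t : ℕ) (G : CoarseGraining n t) :
    E →L[ℂ] E :=
  ∑ k, (C.Qproj (seg (G.s k) t) + C.Qproj (G.T k))

/-- the coarse-grained detectability operator
`DL(t) = (∏_k (1 − Q_{S_k}))·(∏_k (1 − Q_{T_k}))` -/
noncomputable def coarseDL (C : ChainSetup n E) (t : ℕ) (G : CoarseGraining n t) :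
    E →L[ℂ] E :=
  ((List.finRange G.M).map (fun k => 1 - C.Qproj (seg (G.s k) t))).prod *
    ((List.finRange G.M).map (fun k => 1 - C.Qproj (G.T k))).prod

/-- the detectability-lemma operator `DL(H) = ∏_{α=1}^L ∏_{(i,j) ∈ T_α} (1 − P_{ij})`,
taken layer by layer -/
noncomputable def DLHam (C : ChainSetup n E) : E →L[ℂ] E :=
  ((List.finRange C.L).map (fun α =>
    (Finset.univ.filter (fun p : (i : Fin n) × Fin (C.m i) => C.layer p = α)).noncommProd
      (fun p => 1 - C.P p.1 p.2)
      (fun p hp q hq _ =>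
        Commute.sub_left (Commute.one_left _)
          (Commute.sub_right (Commute.one_right _)
            (C.layers p q (by
              simp only [Finset.coe_filter, Set.mem_setOf_eq] at hp hq
              rw [hp.2, hq.2])))))).prod

end ChainSetup

/-!
Let `D = ∏ (1 - P)`, the product taken layer by layer. Each factor removes a component from the
vector, and `P i (D v)` can be charged to the removed components of the at most `g` projections that
do not commute with `P i`; this gives `(g² + γ) ‖D v‖² ≤ g² ‖v‖²` on `Gᗮ` (the detectability lemma).

Let `A` and `B` be the projections onto the common ground spaces of the segments `S_k` and of the
segments `T_k`. Every projector `P i` lies inside a segment, so it annihilates `A v` or `B v`. In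
`(D* D)ᵏ` a factor acts nontrivially between `A v` and `B v` only as part of a chain of noncommuting
factors, from successive layers, that starts outside all `T`-segments and ends outside all
`S`-segments. Each link moves by at most one qudit, and the overlaps of length `t / 4` separate the
two regions, so `⟪A v, (D* D)ᵏ B v⟫ = ⟪A v, B v⟫` as long as `2 L k ≤ t / 4`. Replacing `(D* D)ᵏ`
by a rescaled Chebyshev polynomial of degree `q ≈ t / (8 L)` in `D* D` turns the contraction above
into `|⟪A v, B v⟫| ≤ g² / (g² + 2 q² γ) ‖A v‖ ‖B v‖`. For two projections such a bound implies
`‖A v‖² + ‖B v‖² ≤ (1 + g² / (g² + 2 q² γ)) ‖v‖²`, which bounds the energy of `v` from below.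
-/

section StarProjection

variable {𝕜 V : Type*} [RCLike 𝕜] [NormedAddCommGroup V] [InnerProductSpace 𝕜 V] [CompleteSpace V]
  {P : V →L[𝕜] V}

theorem norm_sub_apply_sq_of_isStarProjection (hP : IsStarProjection P) (v : V) :
    ‖v - P v‖ ^ 2 = ‖v‖ ^ 2 - ‖P v‖ ^ 2 := by
  obtain ⟨K, _, rfl⟩ := isStarProjection_iff_eq_starProjection.mp hP
  rw [← K.starProjection_orthogonal_val, K.norm_sq_eq_add_norm_sq_starProjection v]
  exact (add_sub_cancel_left _ _).symm

theorem re_inner_apply_self_of_isStarProjection (hP : IsStarProjection P) (v : V) :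
    RCLike.re (inner 𝕜 v (P v)) = ‖P v‖ ^ 2 := by
  obtain ⟨K, _, rfl⟩ := isStarProjection_iff_eq_starProjection.mp hP
  exact (inner_re_symm v _).trans (K.re_inner_starProjection_eq_normSq v)

theorem norm_apply_le_of_isStarProjection (hP : IsStarProjection P) (v : V) : ‖P v‖ ≤ ‖v‖ := by
  have hsq : ‖P v‖ ^ 2 ≤ ‖v‖ ^ 2 := by
    linarith [norm_sub_apply_sq_of_isStarProjection hP v, sq_nonneg ‖v - P v‖]
  exact le_of_sq_le_sq hsq (norm_nonneg v)

theorem norm_sub_apply_le_of_isStarProjection (hP : IsStarProjection P) (v : V) :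
    ‖v - P v‖ ≤ ‖v‖ :=
  norm_apply_le_of_isStarProjection hP.one_sub v

theorem apply_apply_self_of_isStarProjection (hP : IsStarProjection P) (v : V) : P (P v) = P v :=
  DFunLike.congr_fun hP.isIdempotentElem.eq v

end StarProjection

section DetectabilityLemma

variable {ι 𝕜 V : Type*} [RCLike 𝕜] [NormedAddCommGroup V] [InnerProductSpace 𝕜 V]
  {P : ι → V →L[𝕜] V} {l : List ι}

/-- The detectability operator `∏_{p ∈ l} (1 - P p)` of a list of projections, the factors being
multiplied in the order of the list (so that the last factor acts first). -/
noncomputable def dlProd (P : ι → V →L[𝕜] V) (l : List ι) : V →L[𝕜] V :=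
  (l.map fun p => 1 - P p).prod

theorem dlProd_cons_apply (a : ι) (v : V) :
    dlProd P (a :: l) v = dlProd P l v - P a (dlProd P l v) := rfl

theorem dlProd_append (l₁ l₂ : List ι) : dlProd P (l₁ ++ l₂) = dlProd P l₁ * dlProd P l₂ := by
  simp only [dlProd, List.map_append, List.prod_append]

theorem dlProd_apply_eq_self {v : V} (hv : ∀ p ∈ l, P p v = 0) : dlProd P l v = v := by
  induction l with
  | nil => rfl
  | cons a l ih =>
    obtain ⟨hav, hlv⟩ := List.forall_mem_cons.mp hv
    rw [dlProd_cons_apply, ih hlv, hav, sub_zero]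

variable [CompleteSpace V]

theorem star_dlProd (hP : ∀ p, IsStarProjection (P p)) (l : List ι) :
    star (dlProd P l) = dlProd P l.reverse := by
  induction l with
  | nil => exact star_one _
  | cons a l ih =>
    rw [List.reverse_cons, dlProd_append, ← ih, dlProd, List.map_cons, List.prod_cons, star_mul,
      (hP a).one_sub.isSelfAdjoint.star_eq]
    simp only [dlProd, List.map_cons, List.map_nil, List.prod_singleton]

open Classical in
/-- Here `d k` is the norm of the component removed when the factor `1 - P k` is applied. -/
theorem exists_dlProd_drops [DecidableEq ι] (hP : ∀ p, IsStarProjection (P p)) (hl : l.Nodup)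
    (v : V) :
    ∃ d : ι → ℝ, (∀ k, 0 ≤ d k) ∧
      ∑ k ∈ l.toFinset, d k ^ 2 = ‖v‖ ^ 2 - ‖dlProd P l v‖ ^ 2 ∧
      ∀ i ∈ l, ‖P i (dlProd P l v)‖ ≤ ∑ k ∈ l.toFinset with ¬ Commute (P i) (P k), d k := by
  induction l with
  | nil => exact ⟨0, by simp [dlProd]⟩
  | cons a l ih =>
    obtain ⟨ha, hl⟩ := List.nodup_cons.mp hl
    obtain ⟨d, hd_nonneg, hd_sum, hd_bound⟩ := ih hl
    set w := dlProd P l v with hw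
    have ha : a ∉ l.toFinset := mt List.mem_toFinset.mp ha
    have hupd : ∀ k ∈ l.toFinset, Function.update d a ‖P a w‖ k = d k := fun k hk =>
      Function.update_of_ne (ne_of_mem_of_not_mem hk ha) _ _
    have hupd_nonneg : ∀ k, 0 ≤ Function.update d a ‖P a w‖ k :=
      (Function.forall_update_iff d _).mpr ⟨norm_nonneg _, fun k _ => hd_nonneg k⟩
    refine ⟨Function.update d a ‖P a w‖, hupd_nonneg, ?_, fun i hi => ?_⟩
    · rw [List.toFinset_cons, Finset.sum_insert ha, dlProd_cons_apply,
        norm_sub_apply_sq_of_isStarProjection (hP a), Function.update_self,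
        Finset.sum_congr rfl fun k hk => by rw [hupd k hk], hd_sum]
      ring
    · rw [dlProd_cons_apply, ← hw, map_sub, List.toFinset_cons, Finset.filter_insert]
      obtain rfl | hi := List.mem_cons.mp hi
      · rw [apply_apply_self_of_isStarProjection (hP i), sub_self, norm_zero]
        exact Finset.sum_nonneg fun k _ => hupd_nonneg k
      have hsum : ∑ k ∈ l.toFinset with ¬ Commute (P i) (P k), Function.update d a ‖P a w‖ k =
          ∑ k ∈ l.toFinset with ¬ Commute (P i) (P k), d k :=
        Finset.sum_congr rfl fun k hk => hupd k (Finset.mem_filter.mp hk).1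
      by_cases hia : Commute (P i) (P a)
      · rw [if_neg (not_not.mpr hia), hsum, show P i (P a w) = P a (P i w) from
          DFunLike.congr_fun hia.eq w]
        exact (norm_sub_apply_le_of_isStarProjection (hP a) _).trans (hd_bound i hi)
      · rw [if_pos hia, Finset.sum_insert (mt (fun h => (Finset.mem_filter.mp h).1) ha), hsum,
          Function.update_self, add_comm]
        exact (norm_sub_le _ _).trans
          (add_le_add (hd_bound i hi) (norm_apply_le_of_isStarProjection (hP i) _))

theorem sum_sq_sum_filter_le (s : Finset ι) (r : ι → ι → Prop) [DecidableRel r]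
    (hr : ∀ i k, r i k → r k i) {g : ℕ} (hg : ∀ i ∈ s, (s.filter (r i)).card ≤ g) (d : ι → ℝ) :
    ∑ i ∈ s, (∑ k ∈ s with r i k, d k) ^ 2 ≤ (g : ℝ) ^ 2 * ∑ k ∈ s, d k ^ 2 := by
  have hr_iff : ∀ i k, r i k ↔ r k i := fun i k => ⟨hr i k, hr k i⟩
  calc ∑ i ∈ s, (∑ k ∈ s with r i k, d k) ^ 2
      ≤ ∑ i ∈ s, g * ∑ k ∈ s with r i k, d k ^ 2 := by
        refine Finset.sum_le_sum fun i hi => sq_sum_le_card_mul_sum_sq.trans ?_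
        gcongr
        exact hg i hi
    _ = g * ∑ k ∈ s, ∑ i ∈ s with r k i, d k ^ 2 := by
        simp only [← Finset.mul_sum, Finset.sum_filter]
        rw [Finset.sum_comm]
        simp only [hr_iff]
    _ ≤ g * ∑ k ∈ s, g * d k ^ 2 := by
        simp only [Finset.sum_const, nsmul_eq_mul]
        gcongr with k hk
        exact hg k hk
    _ = g ^ 2 * ∑ k ∈ s, d k ^ 2 := by rw [← Finset.mul_sum, sq, mul_assoc]

open Classical in
theorem sum_norm_apply_dlProd_sq_le [DecidableEq ι] (hP : ∀ p, IsStarProjection (P p))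
    (hl : l.Nodup) {g : ℕ}
    (hg : ∀ i ∈ l, (l.toFinset.filter fun k => ¬ Commute (P i) (P k)).card ≤ g) (v : V) :
    ∑ i ∈ l.toFinset, ‖P i (dlProd P l v)‖ ^ 2 ≤
      (g : ℝ) ^ 2 * (‖v‖ ^ 2 - ‖dlProd P l v‖ ^ 2) := by
  obtain ⟨d, -, hd_sum, hd_bound⟩ := exists_dlProd_drops hP hl v
  calc ∑ i ∈ l.toFinset, ‖P i (dlProd P l v)‖ ^ 2
      ≤ ∑ i ∈ l.toFinset, (∑ k ∈ l.toFinset with ¬ Commute (P i) (P k), d k) ^ 2 := by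
        gcongr with i hi
        exact hd_bound i (List.mem_toFinset.mp hi)
    _ ≤ (g : ℝ) ^ 2 * ∑ k ∈ l.toFinset, d k ^ 2 :=
        sum_sq_sum_filter_le l.toFinset (fun i k => ¬ Commute (P i) (P k))
          (fun i k h hki => h hki.symm) (fun i hi => hg i (List.mem_toFinset.mp hi)) d
    _ = _ := by rw [hd_sum]

end DetectabilityLemma

section ChebyshevAmplification

open Polynomial

theorem one_add_sq_mul_le_eval_chebyshev_T {u : ℝ} (hu : 0 ≤ u) (q : ℕ) :
    1 + (q : ℝ) ^ 2 * u ≤ (Chebyshev.T ℝ q).eval (1 + u) := by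
  suffices h : 1 + (q : ℝ) ^ 2 * u ≤ (Chebyshev.T ℝ q).eval (1 + u) ∧
      (2 * q + 1) * u ≤ (Chebyshev.T ℝ (q + 1)).eval (1 + u) - (Chebyshev.T ℝ q).eval (1 + u) from
    h.1
  induction q with
  | zero => simp
  | succ q ih =>
    obtain ⟨hvalue, hincrement⟩ := ih
    have hrec : (Chebyshev.T ℝ (q + 2)).eval (1 + u) =
        2 * (1 + u) * (Chebyshev.T ℝ (q + 1)).eval (1 + u) - (Chebyshev.T ℝ q).eval (1 + u) := by
      rw [Chebyshev.T_add_two]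
      simp
    have hone : 1 ≤ (Chebyshev.T ℝ (q + 1)).eval (1 + u) := by
      nlinarith [mul_nonneg (sq_nonneg ((q : ℝ) + 1)) hu]
    push_cast
    rw [add_assoc (q : ℤ) 1 1, one_add_one_eq_two, hrec]
    constructor <;> nlinarith

theorem exists_polynomial_abs_eval_le_and_le_eval_one {a b : ℝ} (ha : 0 ≤ a) (hb : 0 ≤ b) (q : ℕ) :
    ∃ p : ℝ[X], p.natDegree ≤ q ∧ a + 2 * q ^ 2 * b ≤ p.eval 1 ∧
      ∀ x, 0 ≤ x → (a + b) * x ≤ a → |p.eval x| ≤ a := by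
  rcases ha.eq_or_lt with rfl | ha
  · refine ⟨C (2 * q ^ 2 * b) * X ^ q, natDegree_C_mul_X_pow_le _ _, by simp, fun x hx hbx => ?_⟩
    have : b * x = 0 := le_antisymm (by linarith) (mul_nonneg hb hx)
    rcases Nat.eq_zero_or_pos q with rfl | hq <;> rcases mul_eq_zero.mp this with rfl | rfl <;>
      simp [*, ne_of_gt]
  · refine ⟨C a * (Chebyshev.T ℝ q).comp (C (2 * (a + b) / a) * X - 1), ?_, ?_, fun x hx hbx => ?_⟩
    · have hlin : (C (2 * (a + b) / a) * X - 1 : ℝ[X]).natDegree ≤ 1 := by compute_degree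
      have hT : (Chebyshev.T ℝ q).natDegree = q := by simp [Chebyshev.natDegree_T]
      calc _ ≤ (Chebyshev.T ℝ q).natDegree * (C (2 * (a + b) / a) * X - 1 : ℝ[X]).natDegree :=
            (natDegree_C_mul_le _ _).trans natDegree_comp_le
        _ ≤ q := by rw [hT]; exact mul_le_of_le_one_right' hlin
    · have hu := one_add_sq_mul_le_eval_chebyshev_T (u := 2 * b / a) (by positivity) q
      have harg : 2 * (a + b) / a * 1 - 1 = 1 + 2 * b / a := by field_simp; ring
      simp only [eval_mul, eval_C, eval_comp, eval_sub, eval_X, eval_one, harg]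
      calc a + 2 * q ^ 2 * b = a * (1 + q ^ 2 * (2 * b / a)) := by field_simp
        _ ≤ _ := by gcongr
    · have hpos : 0 ≤ (a + b) * x / a := by positivity
      have hle : (a + b) * x / a ≤ 1 := (div_le_one ha).mpr hbx
      have harg : 2 * (a + b) / a * x - 1 = 2 * ((a + b) * x / a) - 1 := by ring
      have hT := Chebyshev.abs_eval_T_real_le_one q (x := 2 * ((a + b) * x / a) - 1)
        (abs_le.mpr ⟨by linarith, by linarith⟩)
      simp only [eval_mul, eval_C, eval_comp, eval_sub, eval_X, eval_one, harg, abs_mul,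
        abs_of_pos ha]
      exact mul_le_of_le_one_right ha.le hT

variable {V : Type*} [NormedAddCommGroup V] [InnerProductSpace ℂ V]

theorem inner_aeval_apply_eq_eval_one_smul {T : V →L[ℂ] V} {p : ℝ[X]} {q : ℕ} (hp : p.natDegree ≤ q)
    {x y : V} (hxy : ∀ k ≤ q, inner ℂ x ((T ^ k) y) = inner ℂ x y) :
    inner ℂ x (aeval T p y) = p.eval 1 • inner ℂ x y := by
  rw [aeval_eq_sum_range' (Nat.lt_succ_of_le hp), eval_eq_sum_range' (Nat.lt_succ_of_le hp),
    sum_apply, inner_sum, Finset.sum_smul]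
  refine Finset.sum_congr rfl fun k hk => ?_
  rw [smul_apply, inner_smul_right_eq_smul, hxy k (Finset.mem_range_succ_iff.mp hk), one_pow,
    mul_one]

theorem mul_opNorm_sq_le_of_forall_apply {A : V →L[ℂ] V} {a c : ℝ} (hc : 0 ≤ c) (ha : 0 ≤ a)
    (hA : ∀ v, c * ‖A v‖ ^ 2 ≤ a * ‖v‖ ^ 2) : c * ‖A‖ ^ 2 ≤ a := by
  rcases hc.eq_or_lt with rfl | hc
  · simpa using ha
  have hA_norm : ‖A‖ ≤ √(a / c) := A.opNorm_le_bound (Real.sqrt_nonneg _) fun v => by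
    rw [← Real.sqrt_sq (norm_nonneg v), ← Real.sqrt_mul (by positivity)]
    refine Real.le_sqrt_of_sq_le ?_
    rw [div_mul_eq_mul_div, le_div_iff₀ hc, mul_comm]
    exact hA v
  calc c * ‖A‖ ^ 2 ≤ c * √(a / c) ^ 2 := by gcongr
    _ = a := by rw [Real.sq_sqrt (by positivity), mul_div_cancel₀ _ hc.ne']

variable [CompleteSpace V]

theorem norm_aeval_le_of_forall_norm_eval_le {T : V →L[ℂ] V} (hT : T.IsPositive) {p : ℝ[X]} {a : ℝ}
    (ha : 0 ≤ a) (hp : ∀ x, 0 ≤ x → x ≤ ‖T‖ → |p.eval x| ≤ a) : ‖aeval T p‖ ≤ a := by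
  rw [← cfc_polynomial p T hT.isSelfAdjoint]
  refine norm_cfc_le ha fun x hx => hp x ?_ ?_
  · exact spectrum_nonneg_of_nonneg (ContinuousLinearMap.nonneg_iff_isPositive T |>.mpr hT) hx
  · calc x ≤ ‖x‖ := le_abs_self x
      _ ≤ ‖T‖ * ‖(1 : V →L[ℂ] V)‖ := spectrum.norm_le_norm_mul_of_mem hx
      _ ≤ ‖T‖ := mul_le_of_le_one_right (norm_nonneg T) ContinuousLinearMap.norm_id_le

theorem pow_star_mul_self_mul_starProjection_apply {D : V →L[ℂ] V} {K : Submodule ℂ V}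
    [K.HasOrthogonalProjection] (hDK : ∀ u ∈ K, (star D * D) u = u) {y : V} (hy : y ∈ Kᗮ) (k : ℕ) :
    ((star (D * Kᗮ.starProjection) * (D * Kᗮ.starProjection)) ^ k) y = ((star D * D) ^ k) y := by
  have hproj : ∀ w ∈ Kᗮ, Kᗮ.starProjection w = w := fun w =>
    Submodule.starProjection_eq_self_iff.mpr
  have hinv : ∀ w ∈ Kᗮ, (star D * D) w ∈ Kᗮ := fun w hw u hu => by
    have hsymm := (IsSelfAdjoint.star_mul_self D).isSymmetric u w
    exact hsymm.symm.trans ((congrArg (inner ℂ · w) (hDK u hu)).trans (hw u hu))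
  suffices h : ((star D * D) ^ k) y ∈ Kᗮ ∧
      ((star (D * Kᗮ.starProjection) * (D * Kᗮ.starProjection)) ^ k) y = ((star D * D) ^ k) y from
    h.2
  induction k with
  | zero => exact ⟨hy, rfl⟩
  | succ k ih =>
    simp only [star_mul, (isSelfAdjoint_starProjection Kᗮ).star_eq] at ih ⊢
    simp only [pow_succ' _ k, mul_apply_eq_comp, ih.2, hproj _ ih.1]
    exact ⟨hinv _ ih.1, hproj _ (hinv _ ih.1)⟩

/-- A contraction of `Kᗮ` by a constant factor is amplified by applying a polynomial in `star D * D`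
which is small on `[0, a / (a + b)]`; powers up to `q` cannot be distinguished from the identity by
the matrix element between `x` and `y`. -/
theorem norm_inner_le_of_inner_pow_eq {D : V →L[ℂ] V} {K : Submodule ℂ V}
    [K.HasOrthogonalProjection] (hDK : ∀ u ∈ K, (star D * D) u = u) {a b : ℝ} (ha : 0 ≤ a)
    (hb : 0 ≤ b) (hD : ∀ v ∈ Kᗮ, (a + b) * ‖D v‖ ^ 2 ≤ a * ‖v‖ ^ 2) {q : ℕ} {x y : V}
    (hy : y ∈ Kᗮ) (hxy : ∀ k ≤ q, inner ℂ x (((star D * D) ^ k) y) = inner ℂ x y) :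
    (a + 2 * q ^ 2 * b) * ‖inner ℂ x y‖ ≤ a * (‖x‖ * ‖y‖) := by
  set A : V →L[ℂ] V := D * Kᗮ.starProjection
  have hA_norm : (a + b) * ‖star A * A‖ ≤ a := by
    rw [CStarRing.norm_star_mul_self, ← sq]
    refine mul_opNorm_sq_le_of_forall_apply (add_nonneg ha hb) ha fun v => ?_
    exact (hD _ (Kᗮ.starProjection_apply_mem v)).trans
      (by gcongr; exact Kᗮ.norm_starProjection_apply_le v)
  obtain ⟨p, hp_deg, hp_one, hp_small⟩ := exists_polynomial_abs_eval_le_and_le_eval_one ha hb q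
  have hp_norm : ‖aeval (star A * A) p‖ ≤ a :=
    norm_aeval_le_of_forall_norm_eval_le (ContinuousLinearMap.isPositive_adjoint_comp_self A) ha
      fun r hr hrA => hp_small r hr <|
        (mul_le_mul_of_nonneg_left hrA (add_nonneg ha hb)).trans hA_norm
  calc (a + 2 * q ^ 2 * b) * ‖inner ℂ x y‖
      ≤ p.eval 1 * ‖inner ℂ x y‖ := by gcongr
    _ ≤ ‖p.eval 1 • inner ℂ x y‖ := by
        rw [norm_smul]; gcongr; exact le_abs_self _
    _ = ‖inner ℂ x (aeval (star A * A) p y)‖ := by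
        rw [inner_aeval_apply_eq_eval_one_smul hp_deg fun k hk => by
          rw [pow_star_mul_self_mul_starProjection_apply hDK hy, hxy k hk]]
    _ ≤ ‖x‖ * (‖aeval (star A * A) p‖ * ‖y‖) :=
        (norm_inner_le_norm _ _).trans (by gcongr; exact ContinuousLinearMap.le_opNorm _ _)
    _ ≤ ‖x‖ * (a * ‖y‖) := by gcongr
    _ = a * (‖x‖ * ‖y‖) := by ring

end ChebyshevAmplification

section CommutingProjections

variable {ι 𝕜 V : Type*} [RCLike 𝕜] [NormedAddCommGroup V] [InnerProductSpace 𝕜 V]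
  {P : ι → V →L[𝕜] V} {l : List ι}

theorem commute_dlProd {A : V →L[𝕜] V} (hA : ∀ p ∈ l, Commute A (P p)) :
    Commute A (dlProd P l) := by
  refine Commute.list_prod_right _ _ fun B hB => ?_
  obtain ⟨p, hp, rfl⟩ := List.mem_map.mp hB
  exact (Commute.one_right A).sub_right (hA p hp)

theorem apply_dlProd_apply_eq_zero {A : V →L[𝕜] V} (hA : ∀ p ∈ l, Commute A (P p)) {v : V}
    (hv : A v = 0) : A (dlProd P l v) = 0 :=
  (DFunLike.congr_fun (commute_dlProd hA).eq v).trans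
    ((congrArg (dlProd P l) hv).trans (map_zero _))

theorem dlProd_filter_apply (hl : l.Pairwise fun p p' => Commute (P p) (P p')) {s : Set ι}
    [DecidablePred (· ∈ s)] {v : V} (hv : ∀ p ∈ s, P p v = 0) :
    dlProd P (l.filter (· ∉ s)) v = dlProd P l v := by
  induction l with
  | nil => rfl
  | cons a l ih =>
    obtain ⟨hal, hl⟩ := List.pairwise_cons.mp hl
    rw [dlProd_cons_apply, ← ih hl]
    by_cases has : a ∈ s
    · rw [List.filter_cons_of_neg (by simpa using has), apply_dlProd_apply_eq_zero
        (fun p hp => hal p (List.mem_of_mem_filter hp)) (hv a has), sub_zero]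
    · rw [List.filter_cons_of_pos (by simpa using has), dlProd_cons_apply]

variable [CompleteSpace V]

theorem inner_dlProd_apply (hP : ∀ p, IsStarProjection (P p)) {x : V} (hx : ∀ p ∈ l, P p x = 0)
    (v : V) : inner 𝕜 x (dlProd P l v) = inner 𝕜 x v := by
  rw [← ContinuousLinearMap.adjoint_inner_left, ← ContinuousLinearMap.star_eq_adjoint,
    star_dlProd hP, dlProd_apply_eq_self fun p hp => hx p (List.mem_reverse.mp hp)]

theorem apply_dlProd_apply_eq_zero_of_mem (hP : ∀ p, IsStarProjection (P p))
    (hcomm : ∀ p p', Commute (P p) (P p')) {p : ι} (hp : p ∈ l) (v : V) :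
    P p (dlProd P l v) = 0 := by
  induction l with
  | nil => simp at hp
  | cons a l ih =>
    rw [dlProd_cons_apply, map_sub, sub_eq_zero]
    obtain rfl | hp := List.mem_cons.mp hp
    · exact (apply_apply_self_of_isStarProjection (hP p) _).symm
    · rw [ih hp, show P p (P a (dlProd P l v)) = P a (P p (dlProd P l v)) from
        DFunLike.congr_fun (hcomm p a).eq _, ih hp, map_zero]

theorem isStarProjection_dlProd (hP : ∀ p, IsStarProjection (P p))
    (hcomm : ∀ p p', Commute (P p) (P p')) (l : List ι) : IsStarProjection (dlProd P l) := by
  induction l with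
  | nil => exact IsStarProjection.one _
  | cons a l ih =>
    exact (hP a).one_sub.mul ih ((Commute.one_left _).sub_left
      (commute_dlProd fun p _ => hcomm a p))

theorem norm_sq_sub_norm_dlProd_apply_sq_le_sum (hP : ∀ p, IsStarProjection (P p))
    (hcomm : ∀ p p', Commute (P p) (P p')) (l : List ι) (v : V) :
    ‖v‖ ^ 2 - ‖dlProd P l v‖ ^ 2 ≤ (l.map fun p => ‖P p v‖ ^ 2).sum := by
  induction l with
  | nil => simp [dlProd]
  | cons a l ih =>
    have hdrop : ‖P a (dlProd P l v)‖ ≤ ‖P a v‖ := by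
      rw [show P a (dlProd P l v) = dlProd P l (P a v) from
        DFunLike.congr_fun (commute_dlProd fun p _ => hcomm a p).eq v]
      exact norm_apply_le_of_isStarProjection (isStarProjection_dlProd hP hcomm l) _
    rw [dlProd_cons_apply, norm_sub_apply_sq_of_isStarProjection (hP a), List.map_cons,
      List.sum_cons]
    linarith [pow_le_pow_left₀ (norm_nonneg _) hdrop 2]

theorem commute_starProjection_orthogonal_ker {A B : V →L[𝕜] V} (hB : IsSelfAdjoint B)
    (hAB : Commute A B) : Commute (LinearMap.ker (A : V →ₗ[𝕜] V))ᗮ.starProjection B := by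
  have hinv : LinearMap.ker (A : V →ₗ[𝕜] V) ∈ Module.End.invtSubmodule (B : V →ₗ[𝕜] V) :=
    fun v hv => (DFunLike.congr_fun hAB.eq v).trans ((congrArg B hv).trans (map_zero B))
  rw [ContinuousLinearMap.IsIdempotentElem.commute_iff
    (Submodule.isIdempotentElem_starProjection _), Submodule.range_starProjection,
    Submodule.ker_starProjection, Submodule.orthogonal_orthogonal]
  exact ⟨hB.isSymmetric.orthogonalComplement_mem_invtSubmodule hinv, hinv⟩

theorem norm_apply_sq_add_norm_apply_sq_le {A B : V →L[𝕜] V} (hA : IsStarProjection A)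
    (hB : IsStarProjection B) {v : V} {δ : ℝ} (hδ : 0 ≤ δ)
    (hAB : ‖inner 𝕜 (A v) (B v)‖ ≤ δ * (‖A v‖ * ‖B v‖)) :
    ‖A v‖ ^ 2 + ‖B v‖ ^ 2 ≤ (1 + δ) * ‖v‖ ^ 2 := by
  set s := ‖A v‖ ^ 2 + ‖B v‖ ^ 2 with hs
  have hs_le : s ≤ ‖v‖ * ‖A v + B v‖ := by
    rw [hs, ← re_inner_apply_self_of_isStarProjection hA,
      ← re_inner_apply_self_of_isStarProjection hB, ← map_add, ← inner_add_right]
    exact re_inner_le_norm v _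
  have hsum : ‖A v + B v‖ ^ 2 ≤ (1 + δ) * s := by
    have hre : RCLike.re (inner 𝕜 (A v) (B v)) ≤ δ * (‖A v‖ * ‖B v‖) :=
      (RCLike.re_le_norm _).trans hAB
    rw [norm_add_sq (𝕜 := 𝕜)]
    nlinarith [mul_nonneg hδ (sq_nonneg (‖A v‖ - ‖B v‖))]
  have hs_nonneg : 0 ≤ s := by positivity
  have hs_sq : s * s ≤ ((1 + δ) * ‖v‖ ^ 2) * s :=
    calc s * s ≤ (‖v‖ * ‖A v + B v‖) * (‖v‖ * ‖A v + B v‖) :=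
          mul_self_le_mul_self hs_nonneg hs_le
      _ = ‖v‖ ^ 2 * ‖A v + B v‖ ^ 2 := by ring
      _ ≤ ‖v‖ ^ 2 * ((1 + δ) * s) := by gcongr
      _ = ((1 + δ) * ‖v‖ ^ 2) * s := by ring
  rcases hs_nonneg.eq_or_lt with hs_zero | hs_pos
  · rw [← hs_zero]
    positivity
  · exact le_of_mul_le_mul_right hs_sq hs_pos

end CommutingProjections

section SpectralGap

section

variable {V : Type*} [NormedAddCommGroup V] [InnerProductSpace ℂ V]

theorem minNonzeroEig_nonneg (A : V →L[ℂ] V) : 0 ≤ minNonzeroEig A :=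
  Real.sInf_nonneg fun _ hc => hc.1.le

theorem minNonzeroEig_le {A : V →L[ℂ] V} {c : ℝ} (hc : 0 < c) {v : V} (hv : v ≠ 0)
    (hAv : A v = (c : ℂ) • v) : minNonzeroEig A ≤ c :=
  csInf_le ⟨0, fun _ hx => hx.1.le⟩ ⟨hc, v, hv, hAv⟩

end

theorem re_inner_apply_self_eq_sum_eigenvalues {A : E →ₗ[ℂ] E} (hA : A.IsSymmetric) (v : E) :
    (inner ℂ v (A v)).re =
      ∑ i, hA.eigenvalues rfl i * ‖inner ℂ (hA.eigenvectorBasis rfl i) v‖ ^ 2 := by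
  rw [← (hA.eigenvectorBasis rfl).sum_inner_mul_inner v (A v), Complex.re_sum]
  refine Finset.sum_congr rfl fun i _ => ?_
  rw [← hA, hA.apply_eigenvectorBasis, inner_smul_left, RCLike.conj_ofReal, mul_left_comm,
    ← inner_conj_symm v, RCLike.conj_mul]
  norm_cast

theorem minNonzeroEig_mul_norm_sq_le {A : E →L[ℂ] E} (hA : A.IsPositive) {v : E}
    (hv : v ∈ (LinearMap.ker (A : E →ₗ[ℂ] E))ᗮ) :
    minNonzeroEig A * ‖v‖ ^ 2 ≤ (inner ℂ v (A v)).re := by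
  have hsymm := hA.isSymmetric
  have hsum := re_inner_apply_self_eq_sum_eigenvalues hsymm v
  rw [ContinuousLinearMap.coe_coe] at hsum
  set b := hsymm.eigenvectorBasis rfl
  have hAb : ∀ i, A (b i) = (hsymm.eigenvalues rfl i : ℂ) • b i :=
    hsymm.apply_eigenvectorBasis rfl
  rw [hsum, ← b.sum_sq_norm_inner_right v, Finset.mul_sum]
  refine Finset.sum_le_sum fun i _ => ?_
  rcases (hA.toLinearMap.nonneg_eigenvalues rfl i).eq_or_lt with hzero | hpos
  · have hker : b i ∈ LinearMap.ker (A : E →ₗ[ℂ] E) :=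
      (hAb i).trans (by rw [← hzero, Complex.ofReal_zero, zero_smul])
    rw [hv _ hker, norm_zero]
    simp
  · gcongr
    exact minNonzeroEig_le hpos (b.orthonormal.ne_zero i) (hAb i)

theorem le_minNonzeroEig {A : E →L[ℂ] E} (hA : IsSelfAdjoint A) {K : Submodule ℂ E} (hK : K ≠ ⊤)
    (hKA : ∀ u ∈ K, A u = 0) {c : ℝ} (hc : 0 < c)
    (hAc : ∀ v ∈ Kᗮ, c * ‖v‖ ^ 2 ≤ (inner ℂ v (A v)).re) : c ≤ minNonzeroEig A := by
  have hsymm := hA.isSymmetric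
  refine le_csInf ?_ ?_
  · obtain ⟨w, hw, hw_ne⟩ := Kᗮ.ne_bot_iff.mp (mt Submodule.orthogonal_eq_bot_iff.mp hK)
    have hpos : 0 < ∑ i, hsymm.eigenvalues rfl i * ‖inner ℂ (hsymm.eigenvectorBasis rfl i) w‖ ^ 2 :=
      calc 0 < c * ‖w‖ ^ 2 := by have := norm_pos_iff.mpr hw_ne; positivity
        _ ≤ (inner ℂ w (A w)).re := hAc w hw
        _ = _ := re_inner_apply_self_eq_sum_eigenvalues hsymm w
    obtain ⟨i, hi⟩ : ∃ i, 0 < hsymm.eigenvalues rfl i := by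
      by_contra! hle
      exact hpos.not_ge (Finset.sum_nonpos fun i _ =>
        mul_nonpos_of_nonpos_of_nonneg (hle i) (sq_nonneg _))
    exact ⟨_, hi, _, (hsymm.eigenvectorBasis rfl).orthonormal.ne_zero i,
      hsymm.apply_eigenvectorBasis rfl i⟩
  · rintro r ⟨hr, v, hv_ne, hv⟩
    have hvK : v ∈ Kᗮ := fun u hu => by
      have hinner : (r : ℂ) * inner ℂ u v = 0 := by
        rw [← inner_smul_right, ← hv, ← ContinuousLinearMap.coe_coe, ← hsymm,
          ContinuousLinearMap.coe_coe, hKA u hu, inner_zero_left]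
      exact (mul_eq_zero.mp hinner).resolve_left (Complex.ofReal_ne_zero.mpr hr.ne')
    have hle : c * ‖v‖ ^ 2 ≤ r * ‖v‖ ^ 2 := by
      have := hAc v hvK
      rw [hv, inner_smul_right, Complex.re_ofReal_mul] at this
      exact this.trans_eq (congrArg (r * ·) (inner_self_eq_norm_sq (𝕜 := ℂ) v))
    exact le_of_mul_le_mul_right hle (by have := norm_pos_iff.mpr hv_ne; positivity)

end SpectralGap

section Absorption

variable {ι 𝕜 V : Type*} [RCLike 𝕜] [NormedAddCommGroup V] [InnerProductSpace 𝕜 V]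
  {P : ι → V →L[𝕜] V} {S : Set ι} {d m : ℕ}

/-- The indices lying `d` noncommutation steps deep inside `S`: `p` belongs to it if and only if
every chain `p = p₀, p₁, …, pₑ` with `e ≤ d` in which consecutive operators do not commute stays
in `S`. -/
def deepSet (P : ι → V →L[𝕜] V) (S : Set ι) : ℕ → Set ι
  | 0 => S
  | d + 1 => {p | p ∈ deepSet P S d ∧ ∀ p', ¬ Commute (P p) (P p') → p' ∈ deepSet P S d}

theorem deepSet_antitone (P : ι → V →L[𝕜] V) (S : Set ι) : Antitone (deepSet P S) :=
  antitone_nat_of_succ_le fun _ _ hp => hp.1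

variable [CompleteSpace V] {x ψ w : V}

theorem apply_eq_zero_and_inner_eq_dlProd (hP : ∀ p, IsStarProjection (P p)) {l : List ι}
    (hl : l.Pairwise fun p p' => Commute (P p) (P p'))
    (hx : ∀ p ∉ deepSet P S d, P p x = 0) (hψ : ∀ p ∈ deepSet P S d, P p ψ = 0) :
    (∀ p ∈ deepSet P S (d + 1), P p (dlProd P l ψ) = 0) ∧
      inner 𝕜 x (dlProd P l ψ) = inner 𝕜 x ψ := by
  classical
  rw [← dlProd_filter_apply hl hψ]
  have hnotMem : ∀ p ∈ l.filter (· ∉ deepSet P S d), p ∉ deepSet P S d := fun p hp => by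
    simpa using List.of_mem_filter hp
  refine ⟨fun p hp => apply_dlProd_apply_eq_zero (fun p' hp' => ?_) (hψ p hp.1),
    inner_dlProd_apply hP (fun p hp => hx p (hnotMem p hp)) ψ⟩
  exact not_not.mp fun hcomm => hnotMem p' hp' (hp.2 p' hcomm)

theorem apply_eq_zero_and_inner_eq_dlProd_flatten (hP : ∀ p, IsStarProjection (P p))
    {LL : List (List ι)} (hLL : ∀ l ∈ LL, l.Pairwise fun p p' => Commute (P p) (P p'))
    (hx : ∀ p ∉ deepSet P S m, P p x = 0) (hd : d + LL.length ≤ m + 1)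
    (hψ : ∀ p ∈ deepSet P S d, P p ψ = 0) :
    (∀ p ∈ deepSet P S (d + LL.length), P p (dlProd P LL.flatten ψ) = 0) ∧
      inner 𝕜 x (dlProd P LL.flatten ψ) = inner 𝕜 x ψ := by
  induction LL with
  | nil => exact ⟨hψ, rfl⟩
  | cons l LL ih =>
    obtain ⟨hl, hLL⟩ := List.forall_mem_cons.mp hLL
    rw [List.length_cons] at hd ⊢
    obtain ⟨hzero, hinner⟩ := ih hLL (by omega)
    have hx_depth : ∀ p ∉ deepSet P S (d + LL.length), P p x = 0 := fun p hp =>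
      hx p fun hpm => hp (deepSet_antitone P S (by omega) hpm)
    rw [List.flatten_cons, dlProd_append, mul_apply_eq_comp, ← hinner]
    exact apply_eq_zero_and_inner_eq_dlProd hP hl hx_depth hzero

theorem star_dlProd_flatten_mul_self (hP : ∀ p, IsStarProjection (P p)) (LL : List (List ι)) :
    star (dlProd P LL.flatten) * dlProd P LL.flatten =
      dlProd P ((LL.map List.reverse).reverse ++ LL).flatten := by
  rw [star_dlProd hP, List.reverse_flatten, List.flatten_append, dlProd_append]

/-- Each layer can spread the action of the noncommuting factors by one step only, so a product of
few layers is absorbed by `x` from the left and by `w` from the right. -/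
theorem inner_star_mul_self_pow_dlProd_apply (hP : ∀ p, IsStarProjection (P p))
    {LL : List (List ι)} (hLL : ∀ l ∈ LL, l.Pairwise fun p p' => Commute (P p) (P p'))
    (hx : ∀ p ∉ deepSet P {p | P p w = 0} m, P p x = 0) {k : ℕ} (hk : 2 * LL.length * k ≤ m + 1) :
    inner 𝕜 x (((star (dlProd P LL.flatten) * dlProd P LL.flatten) ^ k) w) = inner 𝕜 x w := by
  set LL₂ := (LL.map List.reverse).reverse ++ LL with hLL₂_def
  have hlength : LL₂.length = 2 * LL.length := by simp [LL₂, two_mul]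
  have hLL₂ : ∀ l ∈ LL₂, l.Pairwise fun p p' => Commute (P p) (P p') := fun l hl => by
    simp only [LL₂, List.mem_append, List.mem_reverse, List.mem_map] at hl
    obtain ⟨l, hl, rfl⟩ | hl := hl
    · exact List.pairwise_reverse.mpr ((hLL l hl).imp Commute.symm)
    · exact hLL l hl
  rw [star_dlProd_flatten_mul_self hP, ← hLL₂_def]
  suffices h : (∀ p ∈ deepSet P {p | P p w = 0} (2 * LL.length * k),
      P p ((dlProd P LL₂.flatten ^ k) w) = 0) ∧
      inner 𝕜 x ((dlProd P LL₂.flatten ^ k) w) = inner 𝕜 x w from h.2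
  induction k with
  | zero => exact ⟨fun p hp => hp, rfl⟩
  | succ k ih =>
    rw [mul_add_one, ← hlength] at hk ⊢
    rw [← hlength] at ih
    obtain ⟨hzero, hinner⟩ := ih (by omega)
    rw [pow_succ', mul_apply_eq_comp, ← hinner]
    exact apply_eq_zero_and_inner_eq_dlProd_flatten hP hLL₂ hx hk hzero

end Absorption

section Segments

variable {n : ℕ} [NeZero n] {s a v : Fin n} {t r m : ℕ} {F : Finset (Fin n)}

theorem mem_seg : v ∈ seg a t ↔ ∃ z < t, v = a + (z : Fin n) := by
  simp only [seg, Finset.mem_image, Finset.mem_range, eq_comm]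

theorem add_natCast_mem_seg {z : ℕ} (hz : z < t) : s + (z : Fin n) ∈ seg s t :=
  mem_seg.mpr ⟨z, hz, rfl⟩

theorem eq_or_add_eq_of_natCast_eq {z w : ℕ} (hz : z < n) (hw : w < 2 * n)
    (h : (z : Fin n) = (w : Fin n)) : z = w ∨ z + n = w := by
  have hmod := congrArg Fin.val h
  rw [Fin.val_natCast, Fin.val_natCast, Nat.mod_eq_of_lt hz] at hmod
  by_cases hwn : w < n
  · exact Or.inl (hmod.trans (Nat.mod_eq_of_lt hwn))
  · rw [Nat.mod_eq_sub_mod (by omega), Nat.mod_eq_of_lt (by omega)] at hmod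
    omega

theorem exists_eq_add_of_add_natCast_mem_seg {x z : ℕ} (hx : x + t ≤ 2 * n) (hz : z < n)
    (h : s + (z : Fin n) ∈ seg (s + (x : Fin n)) t) : ∃ y < t, z = x + y ∨ z + n = x + y := by
  obtain ⟨y, hy, he⟩ := mem_seg.mp h
  rw [add_assoc, ← Nat.cast_add] at he
  exact ⟨y, hy, eq_or_add_eq_of_natCast_eq hz (by omega) (add_left_cancel he)⟩

theorem exists_add_natCast_mem_of_le_card_seg_inter (hm : 0 < m) (h : m ≤ (seg s t ∩ F).card) :
    ∃ z₁ z₂ : ℕ, z₁ + m ≤ z₂ + 1 ∧ z₂ < t ∧ s + (z₁ : Fin n) ∈ F ∧ s + (z₂ : Fin n) ∈ F := by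
  set Z := (Finset.range t).filter fun z : ℕ => s + (z : Fin n) ∈ F
  have hmZ : m ≤ Z.card := by
    refine h.trans (le_trans (Finset.card_le_card fun v hv => ?_)
      (Finset.card_image_le (f := fun z : ℕ => s + (z : Fin n))))
    obtain ⟨hvs, hvF⟩ := Finset.mem_inter.mp hv
    obtain ⟨z, hz, rfl⟩ := mem_seg.mp hvs
    exact Finset.mem_image_of_mem _ (Finset.mem_filter.mpr ⟨Finset.mem_range.mpr hz, hvF⟩)
  have hZ_ne : Z.Nonempty := Finset.card_pos.mp (hm.trans_le hmZ)
  have hZ_sub : Z ⊆ Finset.Icc (Z.min' hZ_ne) (Z.max' hZ_ne) := fun z hz =>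
    Finset.mem_Icc.mpr ⟨Z.min'_le z hz, Z.le_max' z hz⟩
  have hcard := hmZ.trans (Finset.card_le_card hZ_sub)
  rw [Nat.card_Icc] at hcard
  have hmin := Finset.mem_filter.mp (Z.min'_mem hZ_ne)
  have hmax := Finset.mem_filter.mp (Z.max'_mem hZ_ne)
  exact ⟨_, _, by omega, Finset.mem_range.mp hmax.1, hmin.2, hmax.2⟩

theorem add_natCast_mem_seg_of_le_card_inter (hn : 3 * t + r ≤ n) (hm : 0 < m)
    (h₁ : m ≤ (seg s t ∩ seg a t).card)
    (h₂ : m ≤ (seg (s + ((t + r : ℕ) : Fin n)) t ∩ seg a t).card)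
    {j : ℕ} (hj₁ : t ≤ j + m) (hj₂ : j < t + r + m) : s + (j : Fin n) ∈ seg a t := by
  obtain ⟨x, hxn, rfl⟩ : ∃ x < n, a = s + (x : Fin n) := ⟨(a - s).val, (a - s).isLt, by simp⟩
  obtain ⟨z₁, z₂, hz, hzt, hz₁, hz₂⟩ := exists_add_natCast_mem_of_le_card_seg_inter hm h₁
  obtain ⟨w₁, w₂, hw, hwt, hw₁, hw₂⟩ := exists_add_natCast_mem_of_le_card_seg_inter hm h₂
  rw [add_assoc, ← Nat.cast_add] at hw₁ hw₂
  obtain ⟨_, _, _⟩ := exists_eq_add_of_add_natCast_mem_seg (by omega) (by omega) hz₁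
  obtain ⟨_, _, _⟩ := exists_eq_add_of_add_natCast_mem_seg (by omega) (by omega) hz₂
  obtain ⟨_, _, _⟩ := exists_eq_add_of_add_natCast_mem_seg (by omega) (by omega) hw₁
  obtain ⟨_, _, _⟩ := exists_eq_add_of_add_natCast_mem_seg (by omega) (by omega) hw₂
  refine mem_seg.mpr ⟨j - x, by omega, ?_⟩
  rw [add_assoc, ← Nat.cast_add, Nat.add_sub_cancel' (by omega)]

end Segments

namespace CoarseGraining

variable {n : ℕ} [NeZero n] {t : ℕ} (G : CoarseGraining n t)

include G in
theorem param_pos : 0 < t := by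
  rcases Nat.eq_zero_or_pos t with rfl | ht
  · exact absurd G.hM (by simpa using G.hMpos.ne')
  · exact ht

theorem exists_eq_add_natCast (i : Fin n) :
    ∃ k, ∃ j < t + G.r k, i = G.s k + (j : Fin n) := by
  suffices h : ∀ x : ℕ, ∃ k, ∃ j < t + G.r k,
      G.s ⟨0, G.hMpos⟩ + (x : Fin n) = G.s k + (j : Fin n) by
    simpa using h (i - G.s ⟨0, G.hMpos⟩).val
  have ht := G.param_pos
  intro x
  induction x with
  | zero => exact ⟨⟨0, G.hMpos⟩, 0, by omega, rfl⟩
  | succ x ih =>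
    obtain ⟨k, j, hj, hx⟩ := ih
    have hsucc : G.s ⟨0, G.hMpos⟩ + ((x + 1 : ℕ) : Fin n) = G.s k + ((j + 1 : ℕ) : Fin n) := by
      rw [Nat.cast_add_one, ← add_assoc, hx, Nat.cast_add_one, add_assoc]
    by_cases hlt : j + 1 < t + G.r k
    · exact ⟨k, j + 1, hlt, hsucc⟩
    · refine ⟨cyc k, 0, by omega, ?_⟩
      rw [hsucc, G.hs k, Nat.cast_zero, add_zero, show j + 1 = t + G.r k by omega]

theorem bondIn_T {k : Fin G.M} (hT : G.T k ≠ ∅) (hn : 4 * t ≤ n) (ht : 0 < t / 4) {j : ℕ}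
    (hj₁ : t ≤ j + t / 4) (hj₂ : j + 1 < t + G.r k + t / 4) :
    bondIn (G.s k + (j : Fin n)) (G.T k) := by
  obtain ⟨a, ha⟩ := (G.hT k).resolve_right hT
  have hoverlap₁ := G.hoverlap₁ k hT
  have hoverlap₂ := G.hoverlap₂ k hT
  have hr := G.hr k
  rw [G.hs k] at hoverlap₂
  rw [ha] at hoverlap₁ hoverlap₂ ⊢
  refine ⟨add_natCast_mem_seg_of_le_card_inter (by omega) ht hoverlap₁ hoverlap₂ hj₁ (by omega),
    ?_⟩
  rw [add_assoc, ← Nat.cast_add_one]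
  exact add_natCast_mem_seg_of_le_card_inter (by omega) ht hoverlap₁ hoverlap₂ (by omega) hj₂

theorem eq_last_of_T_eq_empty {k : Fin G.M} (hT : G.T k = ∅) (hn : t ≤ n) {j : ℕ}
    (hj₁ : t ≤ j + 1) (hj₂ : j < t + G.r k) :
    G.s k + (j : Fin n) = ⟨n - 1, Nat.sub_one_lt (NeZero.ne n)⟩ := by
  obtain ⟨hk, hs_first, hs_last⟩ := G.hTempty k hT
  rw [← show k = ⟨G.M - 1, Nat.sub_lt G.hMpos one_pos⟩ from Fin.ext hk] at hs_last
  have hcyc : cyc k = ⟨0, G.hMpos⟩ :=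
    Fin.ext (by simp only [cyc, hk, Nat.sub_add_cancel G.hMpos, Nat.mod_self])
  have hr := G.hr k
  have hr_zero : G.r k = 0 := by
    have hs := congrArg Fin.val (G.hs k)
    rwa [hcyc, hs_first, Fin.val_add, Fin.val_natCast, Nat.add_mod_mod, ← add_assoc, hs_last,
      Nat.add_mod_left, Nat.mod_eq_of_lt (by omega), eq_comm] at hs
  apply Fin.ext
  rw [Fin.val_add, Fin.val_natCast, Nat.add_mod_mod, Nat.mod_eq_of_lt (by omega)]
  simp only
  omega

end CoarseGraining

namespace ChainSetup

section NoncommutationDepth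

variable {n : ℕ} [NeZero n] (C : ChainSetup n E) {t d : ℕ} {G : CoarseGraining n t}

/-- The projectors `P_{ij}` as a single family, indexed by the pairs `(i, j)`. -/
def projFamily (p : (i : Fin n) × Fin (C.m i)) : E →L[ℂ] E := C.P p.1 p.2

variable {C} {S : Set ((i : Fin n) × Fin (C.m i))} {p p' : (i : Fin n) × Fin (C.m i)}

theorem fst_eq_or_adjacent_of_not_commute (h : ¬ Commute (C.projFamily p) (C.projFamily p')) :
    p'.1 = p.1 ∨ p'.1 = p.1 + 1 ∨ p.1 = p'.1 + 1 := by
  by_contra! hne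
  refine h (C.locality p.1 p'.1 p.2 p'.2 ?_)
  simp [hne.1, hne.2.1, hne.2.2.symm]

theorem mem_deepSet_of_fst_eq {k : Fin G.M} (hT : G.T k ≠ ∅) (hn : 4 * t ≤ n) (ht : 0 < t / 4)
    (hS : ∀ p, bondIn p.1 (G.T k) → p ∈ S) {j : ℕ} (hj₁ : t + d ≤ j + t / 4)
    (hj₂ : j + 1 + d < t + G.r k + t / 4) (hp : p.1 = G.s k + (j : Fin n)) :
    p ∈ deepSet C.projFamily S d := by
  induction d generalizing j p with
  | zero => exact hS p (hp ▸ G.bondIn_T hT hn ht hj₁ hj₂)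
  | succ d ih =>
    refine ⟨ih (by omega) (by omega) hp, fun p' hpp' => ?_⟩
    obtain h | h | h := fst_eq_or_adjacent_of_not_commute hpp'
    · exact ih (by omega) (by omega) (h.trans hp)
    · refine ih (j := j + 1) (by omega) (by omega) ?_
      rw [h, hp, Nat.cast_add_one, add_assoc]
    · refine ih (j := j - 1) (by omega) (by omega) (add_right_cancel (b := 1) ?_)
      rw [← h, hp, add_assoc, ← Nat.cast_add_one, Nat.sub_add_cancel (by omega)]

theorem exists_bondIn_seg_or_eq_last_of_notMem_deepSet (hn : 4 * t ≤ n)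
    (hS : ∀ k, ∀ p, bondIn p.1 (G.T k) → p ∈ S) (hd : d < t / 4)
    (hp : p ∉ deepSet C.projFamily S d) :
    (∃ k, bondIn p.1 (seg (G.s k) t)) ∨
      ((∃ k, G.T k = ∅) ∧ p.1 = ⟨n - 1, Nat.sub_one_lt (NeZero.ne n)⟩) := by
  obtain ⟨k, j, hj, hpj⟩ := G.exists_eq_add_natCast p.1
  by_cases hjt : j + 1 < t
  · refine Or.inl ⟨k, hpj ▸ ⟨add_natCast_mem_seg (by omega), ?_⟩⟩
    rw [add_assoc, ← Nat.cast_add_one]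
    exact add_natCast_mem_seg hjt
  · by_cases hT : G.T k = ∅
    · exact Or.inr ⟨⟨k, hT⟩, hpj.trans (G.eq_last_of_T_eq_empty hT (by omega) (by omega) hj)⟩
    · exact absurd
        (mem_deepSet_of_fst_eq hT hn (by omega) (hS k) (by omega) (by omega) hpj) hp

end NoncommutationDepth

variable {n : ℕ} [NeZero n] (C : ChainSetup n E)

theorem isStarProjection_projFamily (p : (i : Fin n) × Fin (C.m i)) :
    IsStarProjection (C.projFamily p) :=
  ⟨(C.proj p.1 p.2).2, (C.proj p.1 p.2).1⟩

theorem isPositive_sum_Hbond (F : Finset (Fin n)) : (∑ i ∈ F, C.Hbond i).IsPositive :=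
  ContinuousLinearMap.isPositive_sum _ fun i _ => ContinuousLinearMap.isPositive_sum _ fun j _ =>
    ContinuousLinearMap.IsPositive.of_isStarProjection (C.isStarProjection_projFamily ⟨i, j⟩)

theorem re_inner_sum_Hbond_apply (F : Finset (Fin n)) (v : E) :
    (inner ℂ v ((∑ i ∈ F, C.Hbond i) v)).re = ∑ i ∈ F, ∑ j, ‖C.projFamily ⟨i, j⟩ v‖ ^ 2 := by
  simp only [Hbond, sum_apply, inner_sum, Complex.re_sum]
  exact Finset.sum_congr rfl fun i _ => Finset.sum_congr rfl fun j _ =>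
    re_inner_apply_self_of_isStarProjection (C.isStarProjection_projFamily ⟨i, j⟩) v

theorem sum_Hbond_apply_eq_zero_iff (F : Finset (Fin n)) (v : E) :
    (∑ i ∈ F, C.Hbond i) v = 0 ↔ ∀ p, p.1 ∈ F → C.projFamily p v = 0 := by
  refine ⟨fun h => ?_, fun h => ?_⟩
  · have henergy := C.re_inner_sum_Hbond_apply F v
    rw [h, inner_zero_right, Complex.zero_re, eq_comm, Finset.sum_eq_zero_iff_of_nonneg
      fun i _ => Finset.sum_nonneg fun j _ => sq_nonneg _] at henergy
    rintro ⟨i, j⟩ hi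
    have hsum := (Finset.sum_eq_zero_iff_of_nonneg fun j _ => sq_nonneg _).mp (henergy i hi)
    exact norm_eq_zero.mp (pow_eq_zero_iff two_ne_zero |>.mp (hsum j (Finset.mem_univ j)))
  · simp only [Hbond, sum_apply]
    exact Finset.sum_eq_zero fun i hi => Finset.sum_eq_zero fun j _ => h ⟨i, j⟩ hi

theorem projFamily_apply_eq_zero_of_Hbond_eq_zero {p : (i : Fin n) × Fin (C.m i)}
    (hp : C.Hbond p.1 = 0) (v : E) : C.projFamily p v = 0 := by
  refine (C.sum_Hbond_apply_eq_zero_iff {p.1} v).mp ?_ p (Finset.mem_singleton_self _)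
  rw [Finset.sum_singleton, hp, zero_apply]

/-- The ground space `G = ker H`. -/
noncomputable def groundSpace : Submodule ℂ E := LinearMap.ker (C.Hfull : E →ₗ[ℂ] E)

theorem mem_groundSpace {u : E} : u ∈ C.groundSpace ↔ ∀ p, C.projFamily p u = 0 :=
  (C.sum_Hbond_apply_eq_zero_iff Finset.univ u).trans
    (forall_congr' fun p => by simp only [Finset.mem_univ, forall_const])

theorem gap_mul_norm_sq_le {v : E} (hv : v ∈ C.groundSpaceᗮ) :
    C.gap * ‖v‖ ^ 2 ≤ ∑ p, ‖C.projFamily p v‖ ^ 2 := by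
  rw [Fintype.sum_sigma, ← re_inner_sum_Hbond_apply]
  exact minNonzeroEig_mul_norm_sq_le (C.isPositive_sum_Hbond _) hv

theorem gap_nonneg : 0 ≤ C.gap := minNonzeroEig_nonneg _

theorem groundSpace_ne_top (hgap : 0 < C.gap) : C.groundSpace ≠ ⊤ := fun htop => by
  obtain ⟨c, hc, v, hv, hHv⟩ :
      {c : ℝ | 0 < c ∧ ∃ v : E, v ≠ 0 ∧ C.Hfull v = (c : ℂ) • v}.Nonempty :=
    Set.nonempty_iff_ne_empty.mpr fun hempty => hgap.ne'
      (by rw [gap, minNonzeroEig, hempty, Real.sInf_empty])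
  have hzero : C.Hfull v = 0 := (htop.symm ▸ Submodule.mem_top : v ∈ C.groundSpace)
  rw [hzero, eq_comm, smul_eq_zero, Complex.ofReal_eq_zero] at hHv
  exact hHv.elim hc.ne' hv

theorem L_pos (hgap : 0 < C.gap) : 0 < C.L := by
  by_contra hL
  refine C.groundSpace_ne_top hgap (Submodule.eq_top_iff'.mpr fun u => C.mem_groundSpace.mpr
    fun p => absurd (C.layer p).pos hL)

/-- The indices of the projectors, listed layer by layer. -/
noncomputable def layerLists : List (List ((i : Fin n) × Fin (C.m i))) :=
  (List.finRange C.L).map fun α => (Finset.univ.filter fun p => C.layer p = α).toList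

theorem length_layerLists : C.layerLists.length = C.L := by
  simp only [layerLists, List.length_map, List.length_finRange]

theorem mem_flatten_layerLists (p : (i : Fin n) × Fin (C.m i)) : p ∈ C.layerLists.flatten := by
  simp [layerLists]

theorem nodup_flatten_layerLists : C.layerLists.flatten.Nodup := by
  refine List.nodup_flatten.mpr ⟨List.forall_mem_map.mpr fun α _ => Finset.nodup_toList _,
    List.pairwise_map.mpr ((List.nodup_finRange C.L).imp fun hαβ p hp hp' => hαβ ?_)⟩
  simp only [Finset.mem_toList, Finset.mem_filter, Finset.mem_univ, true_and] at hp hp'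
  exact hp.symm.trans hp'

theorem pairwise_commute_of_mem_layerLists :
    ∀ l ∈ C.layerLists, l.Pairwise fun p p' => Commute (C.projFamily p) (C.projFamily p') :=
  List.forall_mem_map.mpr fun α _ => List.pairwise_of_forall_mem_list fun p hp p' hp' => by
    simp only [Finset.mem_toList, Finset.mem_filter, Finset.mem_univ, true_and] at hp hp'
    exact C.layers p p' (hp.trans hp'.symm)

open Classical in
theorem card_not_commute_le (s : Finset ((i : Fin n) × Fin (C.m i)))
    (p : (i : Fin n) × Fin (C.m i)) :
    (s.filter fun q => ¬ Commute (C.projFamily p) (C.projFamily q)).card ≤ C.g := by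
  refine le_trans ?_ (C.gbound p)
  rw [Nat.card_eq_fintype_card, Fintype.card_subtype]
  refine Finset.card_le_card fun q hq => ?_
  have hpq := (Finset.mem_filter.mp hq).2
  exact Finset.mem_filter.mpr
    ⟨Finset.mem_univ q, fun h => hpq (h ▸ Commute.refl _), hpq⟩

theorem sq_add_gap_mul_norm_dlProd_apply_sq_le {v : E} (hv : v ∈ C.groundSpaceᗮ) :
    ((C.g : ℝ) ^ 2 + C.gap) * ‖dlProd C.projFamily C.layerLists.flatten v‖ ^ 2 ≤
      (C.g : ℝ) ^ 2 * ‖v‖ ^ 2 := by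
  set D := dlProd C.projFamily C.layerLists.flatten with hD
  have hDv : D v ∈ C.groundSpaceᗮ := fun u hu =>
    (inner_dlProd_apply C.isStarProjection_projFamily
      (fun p _ => C.mem_groundSpace.mp hu p) v).trans (hv u hu)
  have hgap := C.gap_mul_norm_sq_le hDv
  have hdrop := sum_norm_apply_dlProd_sq_le C.isStarProjection_projFamily
    C.nodup_flatten_layerLists (fun p _ => C.card_not_commute_le _ p) v
  rw [Finset.eq_univ_iff_forall.mpr fun p => List.mem_toFinset.mpr (C.mem_flatten_layerLists p),
    ← hD] at hdrop
  linarith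

theorem norm_inner_le_of_deepSet {x y : E} {m q : ℕ}
    (hx : ∀ p ∉ deepSet C.projFamily {p | C.projFamily p y = 0} m, C.projFamily p x = 0)
    (hy : y ∈ C.groundSpaceᗮ) (hq : 2 * C.L * q ≤ m + 1) :
    ((C.g : ℝ) ^ 2 + 2 * q ^ 2 * C.gap) * ‖inner ℂ x y‖ ≤ (C.g : ℝ) ^ 2 * (‖x‖ * ‖y‖) := by
  have hD_fix : ∀ u ∈ C.groundSpace, (star (dlProd C.projFamily C.layerLists.flatten) *
      dlProd C.projFamily C.layerLists.flatten) u = u := fun u hu => by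
    rw [star_dlProd C.isStarProjection_projFamily, ← dlProd_append]
    exact dlProd_apply_eq_self fun p _ => C.mem_groundSpace.mp hu p
  refine norm_inner_le_of_inner_pow_eq hD_fix (sq_nonneg _) C.gap_nonneg
    (fun v => C.sq_add_gap_mul_norm_dlProd_apply_sq_le) hy fun k hk => ?_
  refine inner_star_mul_self_pow_dlProd_apply C.isStarProjection_projFamily
    C.pairwise_commute_of_mem_layerLists hx ?_
  rw [C.length_layerLists]
  exact (Nat.mul_le_mul_left _ hk).trans hq

theorem Qproj_eq_starProjection (F : Finset (Fin n)) :
    C.Qproj F = (LinearMap.ker (C.hamOn F : E →ₗ[ℂ] E))ᗮ.starProjection := rfl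

theorem isStarProjection_Qproj (F : Finset (Fin n)) : IsStarProjection (C.Qproj F) :=
  isStarProjection_starProjection

theorem Qproj_apply_eq_zero_iff {F : Finset (Fin n)} {v : E} :
    C.Qproj F v = 0 ↔ ∀ p, bondIn p.1 F → C.projFamily p v = 0 := by
  rw [Qproj_eq_starProjection, Submodule.starProjection_apply_eq_zero_iff,
    Submodule.orthogonal_orthogonal]
  exact (C.sum_Hbond_apply_eq_zero_iff _ v).trans
    (forall_congr' fun p => by simp only [Finset.mem_filter, Finset.mem_univ, true_and])

theorem commute_hamOn {F F' : Finset (Fin n)} (h : Disjoint F F') :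
    Commute (C.hamOn F) (C.hamOn F') := by
  refine Commute.sum_left _ _ _ fun i hi => Commute.sum_right _ _ _ fun i' hi' =>
    Commute.sum_left _ _ _ fun j _ => Commute.sum_right _ _ _ fun j' _ =>
      C.locality i i' j j' (h.mono ?_ ?_)
  · exact Finset.insert_subset (Finset.mem_filter.mp hi).2.1
      (Finset.singleton_subset_iff.mpr (Finset.mem_filter.mp hi).2.2)
  · exact Finset.insert_subset (Finset.mem_filter.mp hi').2.1
      (Finset.singleton_subset_iff.mpr (Finset.mem_filter.mp hi').2.2)

theorem commute_Qproj {F F' : Finset (Fin n)} (h : Disjoint F F') :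
    Commute (C.Qproj F) (C.Qproj F') := by
  have hham : Commute (C.Qproj F) (C.hamOn F') :=
    commute_starProjection_orthogonal_ker (C.isPositive_sum_Hbond _).isSelfAdjoint
      (C.commute_hamOn h)
  exact (commute_starProjection_orthogonal_ker (C.isStarProjection_Qproj F).isSelfAdjoint
    hham.symm).symm

/-- The product `∏_k (1 - Q_{R k})`. For pairwise disjoint regions `R k` it is the orthogonal
projection onto the common ground space of the Hamiltonians `h_{R k}`. -/
noncomputable def regionsProj {M : ℕ} (R : Fin M → Finset (Fin n)) : E →L[ℂ] E :=
  dlProd (fun k => C.Qproj (R k)) (List.finRange M)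

section RegionsProj

variable {M : ℕ} {R : Fin M → Finset (Fin n)}

theorem regionsProj_apply_mem_orthogonal_groundSpace {v : E} (hv : v ∈ C.groundSpaceᗮ) :
    C.regionsProj R v ∈ C.groundSpaceᗮ := fun u hu =>
  (inner_dlProd_apply (fun k => C.isStarProjection_Qproj (R k)) (fun _ _ =>
    C.Qproj_apply_eq_zero_iff.mpr fun p _ => C.mem_groundSpace.mp hu p) v).trans (hv u hu)

variable (hR : ∀ k l, k ≠ l → Disjoint (R k) (R l))
include hR

theorem commute_Qproj_of_disjoint (k l : Fin M) : Commute (C.Qproj (R k)) (C.Qproj (R l)) := by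
  obtain rfl | hkl := eq_or_ne k l
  · exact Commute.refl _
  · exact C.commute_Qproj (hR k l hkl)

theorem isStarProjection_regionsProj : IsStarProjection (C.regionsProj R) :=
  isStarProjection_dlProd (fun k => C.isStarProjection_Qproj (R k))
    (C.commute_Qproj_of_disjoint hR) _

theorem projFamily_regionsProj_apply {p : (i : Fin n) × Fin (C.m i)} {k : Fin M}
    (hp : bondIn p.1 (R k)) (v : E) : C.projFamily p (C.regionsProj R v) = 0 :=
  C.Qproj_apply_eq_zero_iff.mp (apply_dlProd_apply_eq_zero_of_mem
    (fun k => C.isStarProjection_Qproj (R k)) (C.commute_Qproj_of_disjoint hR)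
    (List.mem_finRange k) v) p hp

theorem norm_sq_sub_norm_regionsProj_apply_sq_le (v : E) :
    ‖v‖ ^ 2 - ‖C.regionsProj R v‖ ^ 2 ≤ ∑ k, ‖C.Qproj (R k) v‖ ^ 2 := by
  rw [← List.sum_ofFn, List.ofFn_eq_map]
  exact norm_sq_sub_norm_dlProd_apply_sq_le_sum (fun k => C.isStarProjection_Qproj (R k))
    (C.commute_Qproj_of_disjoint hR) _ v

end RegionsProj

variable {t q : ℕ} (G : CoarseGraining n t)

theorem isSelfAdjoint_coarseHam : IsSelfAdjoint (C.coarseHam t G) :=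
  isSelfAdjoint_sum _ fun _ _ =>
    (C.isStarProjection_Qproj _).isSelfAdjoint.add (C.isStarProjection_Qproj _).isSelfAdjoint

theorem coarseHam_apply_eq_zero_of_mem_groundSpace {u : E} (hu : u ∈ C.groundSpace) :
    C.coarseHam t G u = 0 := by
  have hQ : ∀ F, C.Qproj F u = 0 := fun F =>
    C.Qproj_apply_eq_zero_iff.mpr fun p _ => C.mem_groundSpace.mp hu p
  simp only [coarseHam, sum_apply, add_apply, hQ, add_zero, Finset.sum_const_zero]

theorem re_inner_coarseHam_apply (v : E) :
    (inner ℂ v (C.coarseHam t G v)).re =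
      ∑ k, ‖C.Qproj (seg (G.s k) t) v‖ ^ 2 + ∑ k, ‖C.Qproj (G.T k) v‖ ^ 2 := by
  simp only [coarseHam, sum_apply, add_apply, inner_sum, inner_add_right, Complex.re_sum,
    Complex.add_re, Finset.sum_add_distrib]
  congr 1 <;> exact Finset.sum_congr rfl fun k _ =>
    re_inner_apply_self_of_isStarProjection (C.isStarProjection_Qproj _) v

variable {G} (hn : 4 * t ≤ n)
  (hopen : (∃ k, G.T k = ∅) → C.Hbond ⟨n - 1, Nat.sub_one_lt (NeZero.ne n)⟩ = 0)
include hn hopen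

theorem norm_inner_regionsProj_le (ht : 0 < t / 4) (hq : 2 * C.L * q ≤ t / 4) {v : E}
    (hv : v ∈ C.groundSpaceᗮ) :
    ((C.g : ℝ) ^ 2 + 2 * q ^ 2 * C.gap) *
        ‖inner ℂ (C.regionsProj (fun k => seg (G.s k) t) v) (C.regionsProj G.T v)‖ ≤
      (C.g : ℝ) ^ 2 *
        (‖C.regionsProj (fun k => seg (G.s k) t) v‖ * ‖C.regionsProj G.T v‖) := by
  refine C.norm_inner_le_of_deepSet (m := t / 4 - 1) (fun p hp => ?_)
    (C.regionsProj_apply_mem_orthogonal_groundSpace hv) (by omega)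
  obtain ⟨k, hk⟩ | ⟨hT, hp⟩ := exists_bondIn_seg_or_eq_last_of_notMem_deepSet hn
    (fun k p hp => C.projFamily_regionsProj_apply G.hTdisj hp v) (by omega) hp
  · exact C.projFamily_regionsProj_apply G.hSdisj hk v
  · exact C.projFamily_apply_eq_zero_of_Hbond_eq_zero (hp ▸ hopen hT) _

theorem mul_norm_sq_le_re_inner_coarseHam_apply (hgap : 0 < C.gap) (hq_pos : 0 < q)
    (hq : 2 * C.L * q ≤ t / 4) {v : E} (hv : v ∈ C.groundSpaceᗮ) :
    2 * q ^ 2 * C.gap / ((C.g : ℝ) ^ 2 + 2 * q ^ 2 * C.gap) * ‖v‖ ^ 2 ≤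
      (inner ℂ v (C.coarseHam t G v)).re := by
  have ht : 0 < t / 4 :=
    (Nat.mul_pos (Nat.mul_pos two_pos (C.L_pos hgap)) hq_pos).trans_le hq
  have hden : 0 < (C.g : ℝ) ^ 2 + 2 * q ^ 2 * C.gap := by positivity
  have hangle := C.norm_inner_regionsProj_le hn hopen ht hq hv
  rw [mul_comm, ← le_div_iff₀ hden, mul_div_right_comm] at hangle
  have hST := norm_apply_sq_add_norm_apply_sq_le (C.isStarProjection_regionsProj G.hSdisj)
    (C.isStarProjection_regionsProj G.hTdisj) (by positivity) hangle
  have hS := C.norm_sq_sub_norm_regionsProj_apply_sq_le G.hSdisj v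
  have hT := C.norm_sq_sub_norm_regionsProj_apply_sq_le G.hTdisj v
  have hone : 2 * q ^ 2 * C.gap / ((C.g : ℝ) ^ 2 + 2 * q ^ 2 * C.gap) =
      1 - (C.g : ℝ) ^ 2 / ((C.g : ℝ) ^ 2 + 2 * q ^ 2 * C.gap) := by
    rw [one_sub_div hden.ne', add_sub_cancel_left]
  rw [C.re_inner_coarseHam_apply, hone]
  linarith

theorem le_minNonzeroEig_coarseHam (hgap : 0 < C.gap) (hq_pos : 0 < q)
    (hq : 2 * C.L * q ≤ t / 4) :
    2 * q ^ 2 * C.gap / ((C.g : ℝ) ^ 2 + 2 * q ^ 2 * C.gap) ≤ minNonzeroEig (C.coarseHam t G) :=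
  le_minNonzeroEig (C.isSelfAdjoint_coarseHam G) (C.groundSpace_ne_top hgap)
    (fun _ => C.coarseHam_apply_eq_zero_of_mem_groundSpace G) (by positivity)
    fun _ => C.mul_norm_sq_le_re_inner_coarseHam_apply hn hopen hgap hq_pos hq

end ChainSetup

theorem stmt_15_general {n : ℕ} [NeZero n] (C : ChainSetup n E) (t : ℕ) (ht : 8 * C.L ≤ t)
    (hn : 4 * t ≤ n) (G : CoarseGraining n t)
    (hopen : (∃ k, G.T k = ∅) → C.Hbond ⟨n - 1, Nat.sub_one_lt (NeZero.ne n)⟩ = 0) :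
    (t : ℝ) ^ 2 * C.gap / (128 * (C.L : ℝ) ^ 2 * (C.g : ℝ) ^ 2 + (t : ℝ) ^ 2 * C.gap) ≤
      minNonzeroEig (C.coarseHam t G) := by
  rcases C.gap_nonneg.eq_or_lt with hgap | hgap
  · rw [← hgap, mul_zero, zero_div]
    exact minNonzeroEig_nonneg _
  have hL := C.L_pos hgap
  set q := t / (8 * C.L)
  have hq_pos : 0 < q := Nat.div_pos ht (by positivity)
  have hq_le : 8 * C.L * q ≤ t := Nat.mul_div_le t _
  have hq_lt : t < 8 * C.L * (q + 1) := Nat.lt_mul_div_succ t (by positivity)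
  have ht_le : t ≤ 16 * C.L * q := by nlinarith
  have ht_sq : (t : ℝ) ^ 2 ≤ (16 * C.L * q) ^ 2 := by gcongr; exact_mod_cast ht_le
  refine le_trans ?_ (C.le_minNonzeroEig_coarseHam hn hopen hgap hq_pos
    ((Nat.le_div_iff_mul_le four_pos).mpr (by linarith)))
  have := G.param_pos
  rw [div_le_div_iff₀ (by positivity) (by positivity)]
  linarith [mul_le_mul_of_nonneg_left ht_sq (by positivity : 0 ≤ (C.g : ℝ) ^ 2 * C.gap)]

/-- for a frustration-free chain Hamiltonian as in the setup with spectral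
gap `γ ≤ g²/4`, noncommutation degree `g`, `L` layers, and coarse-grained Hamiltonian
`H̄(t)` for a coarse-graining parameter `8L² < t < n/5`, one has
`γ(H̄(t)) ≥ t²γ/(400L²g² + 3t²γ)`. -/
theorem stmt_15 {n : ℕ} [NeZero n] (C : ChainSetup n E)
    (t : ℕ) (ht1 : 8 * C.L ^ 2 < t) (ht2 : 5 * t < n)
    (G : CoarseGraining n t)
    (hopen : (∃ k, G.T k = ∅) → C.Hbond ⟨n - 1, by omega⟩ = 0)
    (hγ : C.gap ≤ (C.g : ℝ) ^ 2 / 4) :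
    (t : ℝ) ^ 2 * C.gap /
        (400 * (C.L : ℝ) ^ 2 * (C.g : ℝ) ^ 2 + 3 * (t : ℝ) ^ 2 * C.gap) ≤
      minNonzeroEig (C.coarseHam t G) := by
  rcases C.gap_nonneg.eq_or_lt with hgap | hgap
  · rw [← hgap, mul_zero, zero_div]
    exact minNonzeroEig_nonneg _
  · have hL : C.L ≤ C.L ^ 2 := Nat.le_self_pow two_ne_zero _
    refine le_trans ?_ (stmt_15_general C t (by omega) (by omega) G hopen)
    have ht := G.param_pos
    gcongr
    · norm_num
    · exact le_mul_of_one_le_left (sq_nonneg _) (by norm_num)
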